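/- arXiv:1911.04277 — 6 statements merged into one kernel-verified Lean document; each statement's English description precedes it below -/
import Mathlib

section
/- Let G be a finite simple undirected graph on n ≥ 4 vertices with no isolated vertices, let r be the number of vertices of G of degree 1 and p the number of vertices of degree n − 1. If p = 1, r ≥ 2, n − r is even, and every vertex of G has degree 1, n − r − 1, or n − 1, then G is an equimatchable split graph; moreover, every maximal matching of G has exactly (n − r)/2 edges. -/
open Finset

variable {V : Type*}

/-- A matching of `G`: a set of edges of `G` that are pairwise disjoint. -/
def IsMatching (G : SimpleGraph V) (M : Finset (Sym2 V)) : Prop :=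
  (↑M : Set (Sym2 V)) ⊆ G.edgeSet ∧
    ∀ e ∈ M, ∀ f ∈ M, e ≠ f → ∀ v : V, v ∈ e → v ∉ f

/-- A maximal matching of `G`: a matching such that every edge of `G` shares an
endpoint with some edge of the matching. -/
def IsMaximalMatching (G : SimpleGraph V) (M : Finset (Sym2 V)) : Prop :=
  IsMatching G M ∧ ∀ e ∈ G.edgeSet, ∃ f ∈ M, ∃ v : V, v ∈ e ∧ v ∈ f

/-- `G` is equimatchable if all maximal matchings have the same cardinality. -/
def Equimatchable (G : SimpleGraph V) : Prop :=
  ∀ M₁ M₂ : Finset (Sym2 V), IsMaximalMatching G M₁ → IsMaximalMatching G M₂ →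
    M₁.card = M₂.card

/-- An independent set: a set of pairwise non-adjacent vertices. -/
def IsIndepSet (G : SimpleGraph V) (s : Set V) : Prop :=
  s.Pairwise fun a b => ¬ G.Adj a b

/-- A split graph: the vertex set can be partitioned into a clique and an
independent set. -/
def IsSplitGraph (G : SimpleGraph V) : Prop :=
  ∃ K I : Set V, Disjoint K I ∧ K ∪ I = Set.univ ∧ G.IsClique K ∧ IsIndepSet G I

/-!
A universal vertex `u` is the only neighbour of every vertex of degree 1, so the other `n - r`
vertices can only have degree at least `n - r - 1` if they form a clique `K`, to which the vertices
of degree 1 are attached at `u`.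
A maximal matching `M` misses at most one vertex of `K`, so `n - r ≤ 2 * #M + 1`. At most one edge
of `M` contains `u`, and the others lie in `K` without `u`, so `2 * (#M - 1) ≤ n - r - 1`.
Since `n - r` is even, these two bounds leave only `#M = (n - r) / 2`.
-/

section Matching

variable {G : SimpleGraph V} {M N : Finset (Sym2 V)}

lemma IsMatching.subset (hM : IsMatching G M) (hNM : N ⊆ M) : IsMatching G N :=
  ⟨(coe_subset.mpr hNM).trans hM.1, fun e he f hf ↦ hM.2 e (hNM he) f (hNM hf)⟩

section MatchedVerts

variable [DecidableEq V]

/-- The vertices covered by a set of edges; for a matching, its matched vertices. -/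
def matchedVerts (M : Finset (Sym2 V)) : Finset V :=
  M.biUnion Sym2.toFinset

lemma mem_matchedVerts {v : V} : v ∈ matchedVerts M ↔ ∃ e ∈ M, v ∈ e := by
  simp [matchedVerts]

lemma IsMatching.card_matchedVerts (hM : IsMatching G M) : #(matchedVerts M) = 2 * #M := by
  have hdisj : (M : Set (Sym2 V)).PairwiseDisjoint Sym2.toFinset := fun e he f hf hef ↦
    disjoint_left.mpr fun v hve hvf ↦
      hM.2 e he f hf hef v (Sym2.mem_toFinset.mp hve) (Sym2.mem_toFinset.mp hvf)
  have hcard : ∀ e ∈ M, #e.toFinset = 2 := fun e he ↦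
    Sym2.card_toFinset_of_not_isDiag e (G.not_isDiag_of_mem_edgeSet (hM.1 he))
  rw [matchedVerts, card_biUnion hdisj, sum_const_nat hcard, mul_comm]

lemma IsMatching.card_filter_mem_le_one (hM : IsMatching G M) (v : V) : #{e ∈ M | v ∈ e} ≤ 1 := by
  simp only [card_le_one, mem_filter]
  rintro e ⟨he, hve⟩ f ⟨hf, hvf⟩
  by_contra hef
  exact hM.2 e he f hf hef v hve hvf

lemma IsMaximalMatching.isIndepSet_compl_matchedVerts (hM : IsMaximalMatching G M) :
    IsIndepSet G (matchedVerts M : Set V)ᶜ := by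
  intro a ha b hb _ hab
  obtain ⟨e, he, v, hv, hve⟩ := hM.2 s(a, b) hab
  have hvM : v ∈ matchedVerts M := mem_matchedVerts.mpr ⟨e, he, hve⟩
  obtain rfl | rfl := Sym2.mem_iff.mp hv
  exacts [ha hvM, hb hvM]

end MatchedVerts

lemma IsMaximalMatching.card_le_of_isClique (hM : IsMaximalMatching G M) {K : Finset V}
    (hK : G.IsClique (K : Set V)) : #K ≤ 2 * #M + 1 := by
  classical
  have hmissed : #(K \ matchedVerts M) ≤ 1 := by
    simp only [card_le_one, mem_sdiff]
    rintro a ⟨haK, haM⟩ b ⟨hbK, hbM⟩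
    by_contra hab
    exact hM.isIndepSet_compl_matchedVerts (by simpa using haM) (by simpa using hbM) hab
      (hK haK hbK hab)
  rw [← hM.1.card_matchedVerts]
  have := le_card_sdiff (matchedVerts M) K
  omega

end Matching

/-- `G` is obtained from the clique `K` by attaching pendant vertices to its vertex `u`. Isolated
vertices outside `K` are allowed as well. -/
structure IsCliqueWithPendants (G : SimpleGraph V) (K : Set V) (u : V) : Prop where
  isClique : G.IsClique K
  mem : u ∈ K
  eq_of_adj : ∀ ⦃v w⦄, v ∉ K → G.Adj v w → w = u

namespace IsCliqueWithPendants

variable {G : SimpleGraph V} {u : V}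

lemma isSplitGraph {K : Set V} (h : IsCliqueWithPendants G K u) : IsSplitGraph G := by
  refine ⟨K, Kᶜ, disjoint_compl_right, Set.union_compl_self K, h.isClique, ?_⟩
  intro v hv w hw _ hvw
  exact hw (h.eq_of_adj hv hvw ▸ h.mem)

variable {K : Finset V} {M : Finset (Sym2 V)}

lemma two_mul_card_le_of_isMatching (h : IsCliqueWithPendants G K u) (hM : IsMatching G M) :
    2 * #M ≤ #K + 1 := by
  classical
  let N : Finset (Sym2 V) := {e ∈ M | u ∉ e}
  have hNK : matchedVerts N ⊆ K.erase u := by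
    intro v hv
    obtain ⟨e, he, w, rfl⟩ := mem_matchedVerts.mp hv
    obtain ⟨heM, hue⟩ := mem_filter.mp he
    obtain ⟨huv, huw⟩ : u ≠ v ∧ u ≠ w := by simpa using hue
    refine mem_erase.mpr ⟨huv.symm, ?_⟩
    by_contra hvK
    exact huw (h.eq_of_adj hvK (hM.1 heM)).symm
  have hcardN : 2 * #N ≤ #K - 1 := by
    rw [← (hM.subset (filter_subset _ M)).card_matchedVerts, ← card_erase_of_mem h.mem]
    exact card_le_card hNK
  have hcardM : #{e ∈ M | u ∈ e} + #N = #M := card_filter_add_card_filter_not _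
  have hcardu := hM.card_filter_mem_le_one u
  have hcardK : 0 < #K := card_pos.mpr ⟨u, h.mem⟩
  omega

lemma card_of_isMaximalMatching (h : IsCliqueWithPendants G K u) (hK : Even #K)
    (hM : IsMaximalMatching G M) : #M = #K / 2 := by
  have hle := hM.card_le_of_isClique h.isClique
  have hge := h.two_mul_card_le_of_isMatching hM.1
  obtain ⟨k, hk⟩ := hK
  omega

lemma equimatchable (h : IsCliqueWithPendants G K u) (hK : Even #K) : Equimatchable G :=
  fun _ _ h₁ h₂ ↦
    (h.card_of_isMaximalMatching hK h₁).trans (h.card_of_isMaximalMatching hK h₂).symm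

end IsCliqueWithPendants

section Degree

variable {G : SimpleGraph V}

lemma adj_of_card_sub_one_le_degree {K : Finset V} {v w : V} [Fintype (G.neighborSet v)]
    (hv : v ∈ K) (hsub : G.neighborFinset v ⊆ K) (hdeg : #K - 1 ≤ G.degree v)
    (hw : w ∈ K) (hvw : v ≠ w) : G.Adj v w := by
  classical
  have hnbr : G.neighborFinset v = K.erase v :=
    eq_of_subset_of_card_le (subset_erase.mpr ⟨hsub, by simp⟩)
      (by simpa [card_erase_of_mem hv] using hdeg)
  rw [← SimpleGraph.mem_neighborFinset, hnbr]
  exact mem_erase.mpr ⟨hvw.symm, hw⟩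

variable [Fintype V] [DecidableRel G.Adj] {u : V}

lemma eq_of_isUniversal_of_degree_eq_one (hu : G.IsUniversal u) {v w : V} (huv : u ≠ v)
    (hv : G.degree v = 1) (hvw : G.Adj v w) : w = u :=
  (SimpleGraph.degree_eq_one_iff_existsUnique_adj.mp hv).unique hvw (hu huv).symm

lemma isCliqueWithPendants_of_isUniversal (hu : G.IsUniversal u) (hu1 : G.degree u ≠ 1)
    (hdeg : ∀ v, G.degree v ≠ 1 → #{w | G.degree w ≠ 1} - 1 ≤ G.degree v) :
    IsCliqueWithPendants G ({v | G.degree v ≠ 1} : Finset V) u := by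
  have hpendant : ∀ ⦃v w⦄, G.degree v = 1 → G.Adj v w → w = u := fun v w hv ↦
    eq_of_isUniversal_of_degree_eq_one hu (by rintro rfl; exact hu1 hv) hv
  refine ⟨fun v hv w hw hvw ↦ ?_, by simpa using hu1, fun v w hv ↦ hpendant (by simpa using hv)⟩
  obtain rfl | hvu := eq_or_ne v u
  · exact hu hvw
  refine adj_of_card_sub_one_le_degree (mem_coe.mp hv) (fun x hx ↦ ?_) (hdeg v (by simpa using hv))
    (mem_coe.mp hw) hvw
  rw [SimpleGraph.mem_neighborFinset] at hx
  exact mem_filter.mpr ⟨mem_univ x, fun hx1 ↦ hvu (hpendant hx1 hx.symm)⟩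

end Degree

theorem stmt_12_general [Fintype V] {G : SimpleGraph V} [DecidableRel G.Adj] {n r : ℕ} {u : V}
    (hn : Fintype.card V = n) (hn2 : n ≠ 2) (hu : G.degree u = n - 1)
    (hr : r = #{v | G.degree v = 1}) (heven : Even (n - r))
    (hdeg : ∀ v, G.degree v ≠ 1 → n - r - 1 ≤ G.degree v) :
    (Equimatchable G ∧ IsSplitGraph G) ∧
      ∀ M : Finset (Sym2 V), IsMaximalMatching G M → #M = (n - r) / 2 := by
  subst hn
  have hK : #{v | G.degree v ≠ 1} = Fintype.card V - r := by
    have : #{v | G.degree v = 1} + #{v | G.degree v ≠ 1} = Fintype.card V :=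
      card_filter_add_card_filter_not _
    omega
  rw [← hK] at heven hdeg ⊢
  have h := isCliqueWithPendants_of_isUniversal ((G.degree_eq_card_sub_one u).mp hu)
    (by omega) hdeg
  exact ⟨⟨h.equimatchable heven, h.isSplitGraph⟩, fun _ ↦ h.card_of_isMaximalMatching heven⟩

theorem stmt_12 {V : Type*} [Fintype V] [DecidableEq V]
    (G : SimpleGraph V) [DecidableRel G.Adj]
    (n : ℕ) (hn : Fintype.card V = n) (hn4 : 4 ≤ n)
    (hNoIso : ∀ v : V, ∃ w : V, G.Adj v w)
    (r p : ℕ)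
    (hr : r = (Finset.univ.filter fun v : V => G.degree v = 1).card)
    (hp : p = (Finset.univ.filter fun v : V => G.degree v = n - 1).card)
    (hp1 : p = 1) (hr2 : 2 ≤ r) (heven : Even (n - r))
    (hdeg : ∀ v : V, G.degree v = 1 ∨ G.degree v = n - r - 1 ∨ G.degree v = n - 1) :
    (Equimatchable G ∧ IsSplitGraph G) ∧
      ∀ M : Finset (Sym2 V), IsMaximalMatching G M → M.card = (n - r) / 2 := by
  obtain ⟨u, hu⟩ : ∃ u, G.degree u = n - 1 := by
    simpa [Finset.Nonempty] using card_pos.mp (by omega : 0 < #{v | G.degree v = n - 1})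
  exact stmt_12_general hn (by omega) hu hr heven fun v hv ↦ by have := hdeg v; omega
end

section
/- Let G be a finite simple undirected graph on n ≥ 4 vertices with no isolated vertices, let r be the number of vertices of G of degree 1 and p the number of vertices of degree n − 1. If p = 0, r ≥ 2, n − r is even, and there exist non-adjacent vertices x and y with d(x) = n − 2 and d(y) = n − r − 2 such that every vertex other than x and y has degree 1 or n − r − 1, then G is an equimatchable split graph; moreover, every maximal matching of G has exactly (n − r)/2 edges. -/
open Finset

variable {V : Type*}

/-! Let `C` be the set of vertices of degree different from 1. Since `x` is adjacent to everything
except `y`, all vertices of degree 1 hang off `x`, and counting degrees shows that `C` is a clique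
with the edge `xy` removed. A maximal matching covers `x`, and at most one vertex outside `C`
because all of these can only be matched to `x`; as `C \ {x}` is a clique, it misses at most one
vertex of `C`. It covers an even number of vertices and `|C|` is even, so it covers exactly `|C|`
vertices. -/

section Matching

variable {G : SimpleGraph V} {M : Finset (Sym2 V)}

theorem IsMatching.eq_of_mem_of_mem (hM : IsMatching G M) {e f : Sym2 V} {v : V} (he : e ∈ M)
    (hf : f ∈ M) (hve : v ∈ e) (hvf : v ∈ f) : e = f := by
  by_contra hef
  exact hM.2 e he f hf hef v hve hvf

variable [DecidableEq V]

/-- The set of vertices covered by (that is, lying on some edge of) `M`. -/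
def coveredVertices (M : Finset (Sym2 V)) : Finset V :=
  M.biUnion Sym2.toFinset

theorem mem_coveredVertices {v : V} : v ∈ coveredVertices M ↔ ∃ e ∈ M, v ∈ e := by
  simp [coveredVertices]

theorem IsMatching.card_coveredVertices (hM : IsMatching G M) :
    #(coveredVertices M) = 2 * #M := by
  have hdisj : (M : Set (Sym2 V)).PairwiseDisjoint Sym2.toFinset := by
    intro e he f hf hef
    refine Finset.disjoint_left.2 fun v hve hvf => ?_
    exact hM.2 e he f hf hef v (Sym2.mem_toFinset.1 hve) (Sym2.mem_toFinset.1 hvf)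
  have hcard : ∀ e ∈ M, #e.toFinset = 2 := fun e he =>
    Sym2.card_toFinset_of_not_isDiag e (G.not_isDiag_of_mem_edgeSet (hM.1 he))
  rw [coveredVertices, card_biUnion hdisj, sum_const_nat hcard, mul_comm]

theorem IsMaximalMatching.mem_coveredVertices_or_mem (hM : IsMaximalMatching G M) {u v : V}
    (huv : G.Adj u v) : u ∈ coveredVertices M ∨ v ∈ coveredVertices M := by
  obtain ⟨f, hf, w, hw, hwf⟩ := hM.2 s(u, v) huv
  have hwM : w ∈ coveredVertices M := mem_coveredVertices.2 ⟨f, hf, hwf⟩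
  rcases Sym2.mem_iff.1 hw with rfl | rfl
  · exact .inl hwM
  · exact .inr hwM

theorem IsMaximalMatching.card_sdiff_coveredVertices_le_one (hM : IsMaximalMatching G M)
    {K : Finset V} (hK : G.IsClique (K : Set V)) : #(K \ coveredVertices M) ≤ 1 := by
  refine card_le_one.2 fun a ha b hb => ?_
  rw [mem_sdiff] at ha hb
  by_contra hab
  exact (hM.mem_coveredVertices_or_mem (hK ha.1 hb.1 hab)).elim ha.2 hb.2

end Matching

section Hub

variable {G : SimpleGraph V} {M : Finset (Sym2 V)} {x : V}

/-- `x` is a hub of `G` over `C`: a vertex outside `C` has no neighbour other than `x`, so outside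
`C` there are only isolated vertices and pendant vertices attached to `x`. -/
def IsHub (G : SimpleGraph V) (C : Set V) (x : V) : Prop :=
  ∀ ⦃l v : V⦄, l ∉ C → G.Adj l v → v = x

theorem IsHub.eq_mk_of_mem {C : Set V} (h : IsHub G C x) {l : V} (hl : l ∉ C) {e : Sym2 V}
    (he : e ∈ G.edgeSet) (hle : l ∈ e) : e = s(l, x) := by
  obtain ⟨v, rfl⟩ := hle
  rw [h hl (G.mem_edgeSet.1 he)]

theorem IsHub.isSplitGraph {C : Set V} (h : IsHub G C x) {y : V} (hxy : x ≠ y)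
    (hK : G.IsClique (C \ {y})) : IsSplitGraph G := by
  refine ⟨C \ {y}, (C \ {y})ᶜ, disjoint_compl_right, Set.union_compl_self _, hK, ?_⟩
  intro a ha b hb hab hadj
  by_cases haC : a ∈ C
  · have hay : a = y := by simpa [haC] using ha
    have hbC : b ∉ C := fun hbC => hb ⟨hbC, fun hby => hab (hay.trans hby.symm)⟩
    exact hxy ((h hbC hadj.symm).symm.trans hay)
  · obtain rfl : b = x := h haC hadj
    have hbC : b ∉ C := fun hbC => hb ⟨hbC, hxy⟩
    exact hab (h hbC hadj.symm)

theorem IsHub.self_mem_coveredVertices [DecidableEq V] {C : Set V} (h : IsHub G C x) {l : V}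
    (hl : l ∉ C) (hxl : G.Adj x l) (hM : IsMaximalMatching G M) : x ∈ coveredVertices M := by
  rcases hM.mem_coveredVertices_or_mem hxl with hx | hlM
  · exact hx
  · obtain ⟨e, he, hle⟩ := mem_coveredVertices.1 hlM
    refine mem_coveredVertices.2 ⟨e, he, ?_⟩
    rw [h.eq_mk_of_mem hl (hM.1.1 he) hle]
    exact Sym2.mem_mk_right l x

theorem IsHub.card_coveredVertices_sdiff_le_one [DecidableEq V] {C : Finset V}
    (h : IsHub G (C : Set V) x) (hM : IsMatching G M) : #(coveredVertices M \ C) ≤ 1 := by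
  refine card_le_one.2 fun a ha b hb => ?_
  rw [mem_sdiff, mem_coveredVertices] at ha hb
  obtain ⟨⟨e, he, hae⟩, haC⟩ := ha
  obtain ⟨⟨f, hf, hbf⟩, hbC⟩ := hb
  have hea : e = s(a, x) := h.eq_mk_of_mem haC (hM.1 he) hae
  have hfb : f = s(b, x) := h.eq_mk_of_mem hbC (hM.1 hf) hbf
  have hef : e = f := hM.eq_of_mem_of_mem (v := x) he hf (by simp [hea]) (by simp [hfb])
  exact Sym2.congr_left.1 (hea.symm.trans (hef.trans hfb))

theorem IsHub.two_mul_card_of_isMaximalMatching {C : Finset V} (h : IsHub G (C : Set V) x)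
    {l : V} (hl : l ∉ C) (hxl : G.Adj x l) (hK : G.IsClique ((C : Set V) \ {x}))
    (hC : Even #C) (hM : IsMaximalMatching G M) : 2 * #M = #C := by
  classical
  have hx : x ∈ coveredVertices M := h.self_mem_coveredVertices hl hxl hM
  have houter : #(coveredVertices M \ C) ≤ 1 := h.card_coveredVertices_sdiff_le_one hM.1
  have hinner : #(C \ coveredVertices M) ≤ 1 := by
    have hsdiff : C \ coveredVertices M = C.erase x \ coveredVertices M := by
      rw [erase_sdiff_comm, erase_eq_of_notMem fun hxC => (mem_sdiff.1 hxC).2 hx]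
    rw [hsdiff]
    exact hM.card_sdiff_coveredVertices_le_one (by rwa [coe_erase])
  have hcovered : #(coveredVertices M) = 2 * #M := hM.1.card_coveredVertices
  have hcount : #(C \ coveredVertices M) + #(coveredVertices M) =
      #(coveredVertices M \ C) + #C := by
    rw [card_sdiff_add_card, card_sdiff_add_card, union_comm]
  obtain ⟨k, hk⟩ := hC
  omega

end Hub

section Degrees

variable {G : SimpleGraph V} {x y : V}

theorem isClique_diff_singleton_of_forall_adj {C : Set V}
    (h : ∀ v ∈ C, v ≠ x → v ≠ y → ∀ w ∈ C, w ≠ v → G.Adj v w) : G.IsClique (C \ {x}) := by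
  rintro a ⟨haC, hax⟩ b ⟨hbC, hbx⟩ hab
  by_cases hay : a = y
  · have hby : b ≠ y := fun hby => hab (hay.trans hby.symm)
    exact (h b hbC hbx hby a haC hab).symm
  · exact h a haC hax hay b hbC hab.symm

theorem adj_of_mem_of_card_le_degree {v : V} [Fintype (G.neighborSet v)] {s : Finset V}
    (hsub : ∀ u, G.Adj v u → u ∈ s) (hcard : #s ≤ G.degree v) {w : V} (hw : w ∈ s) :
    G.Adj v w := by
  have heq : G.neighborFinset v = s :=
    eq_of_subset_of_card_le (fun u hu => hsub u ((G.mem_neighborFinset v u).1 hu))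
      (by rwa [SimpleGraph.card_neighborFinset_eq_degree])
  rwa [← SimpleGraph.mem_neighborFinset, heq]

theorem IsHub.adj_of_card_le_degree_add_one {C : Finset V} (h : IsHub G (C : Set V) x) {v w : V}
    [Fintype (G.neighborSet v)] (hv : v ∈ C) (hvx : v ≠ x) (hdeg : #C ≤ G.degree v + 1)
    (hw : w ∈ C) (hwv : w ≠ v) : G.Adj v w := by
  classical
  have hsub : ∀ u, G.Adj v u → u ∈ C.erase v := by
    intro u hu
    refine mem_erase.2 ⟨hu.ne', ?_⟩
    by_contra huC
    exact hvx (h huC hu.symm)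
  have hcard : #(C.erase v) ≤ G.degree v := by
    rw [card_erase_of_mem hv]
    exact Nat.sub_le_of_le_add hdeg
  exact adj_of_mem_of_card_le_degree hsub hcard (mem_erase.2 ⟨hwv, hw⟩)

theorem adj_of_card_le_degree_add_two [Fintype V] [Fintype (G.neighborSet x)] (hxy : x ≠ y)
    (hadj : ¬ G.Adj x y) (hdeg : Fintype.card V ≤ G.degree x + 2) {v : V} (hvx : v ≠ x)
    (hvy : v ≠ y) : G.Adj x v := by
  classical
  have hsub : ∀ u, G.Adj x u → u ∈ ({x, y}ᶜ : Finset V) := by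
    intro u hu
    have huy : u ≠ y := fun h => hadj (h ▸ hu)
    simp [hu.ne', huy]
  have hcard : #({x, y}ᶜ : Finset V) ≤ G.degree x := by
    rw [card_compl, card_pair hxy]
    exact Nat.sub_le_of_le_add hdeg
  exact adj_of_mem_of_card_le_degree hsub hcard (by simp [hvx, hvy])

variable [Fintype V] [DecidableRel G.Adj]

/-- The set of leaves (vertices of degree 1) of `G`. -/
def leaves (G : SimpleGraph V) [DecidableRel G.Adj] : Finset V :=
  {v | G.degree v = 1}

theorem mem_leaves {v : V} : v ∈ leaves G ↔ G.degree v = 1 := by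
  simp [leaves]

theorem isHub_compl_leaves [DecidableEq V] (h : ∀ l ∈ leaves G, G.Adj x l) :
    IsHub G ((leaves G)ᶜ : Finset V) x := by
  intro l v hl hlv
  have hlL : l ∈ leaves G := by simpa using hl
  have hl1 : ∃! w, G.Adj l w := SimpleGraph.degree_eq_one_iff_existsUnique_adj.1 (mem_leaves.1 hlL)
  exact hl1.unique hlv (h l hlL).symm

end Degrees

theorem stmt_13_general {V : Type*} [Fintype V]
    (G : SimpleGraph V) [DecidableRel G.Adj]
    (n : ℕ) (hn : Fintype.card V = n) (hn4 : 4 ≤ n)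
    (r : ℕ) (hr : r = #{v | G.degree v = 1}) (hr1 : 1 ≤ r) (heven : Even (n - r))
    (x y : V) (hxy : x ≠ y) (hadj : ¬ G.Adj x y)
    (hdx : G.degree x = n - 2) (hdy : G.degree y = n - r - 2)
    (hdeg : ∀ v : V, v ≠ x → v ≠ y → (G.degree v = 1 ∨ G.degree v = n - r - 1)) :
    (Equimatchable G ∧ IsSplitGraph G) ∧
      ∀ M : Finset (Sym2 V), IsMaximalMatching G M → #M = (n - r) / 2 := by
  classical
  have hnr : n - r ≠ 3 := fun h => absurd (h ▸ heven) (by decide)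
  have hxL : x ∉ leaves G := fun hx => absurd (mem_leaves.1 hx) (by omega)
  have hyL : y ∉ leaves G := fun hy => absurd (mem_leaves.1 hy) (by omega)
  have hleaf : ∀ l ∈ leaves G, G.Adj x l := fun l hl =>
    adj_of_card_le_degree_add_two hxy hadj (by omega) (ne_of_mem_of_not_mem hl hxL)
      (ne_of_mem_of_not_mem hl hyL)
  have hhub : IsHub G ((leaves G)ᶜ : Finset V) x := isHub_compl_leaves hleaf
  have hcard : #(leaves G)ᶜ = n - r := by rw [card_compl, hn, hr, leaves]
  have hcore : ∀ v ∈ (leaves G)ᶜ, v ≠ x → v ≠ y → ∀ w ∈ (leaves G)ᶜ, w ≠ v → G.Adj v w := by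
    intro v hv hvx hvy w hw hwv
    have hdv := (hdeg v hvx hvy).resolve_left fun h => mem_compl.1 hv (mem_leaves.2 h)
    exact hhub.adj_of_card_le_degree_add_one hv hvx (by omega) hw hwv
  have hsplit : IsSplitGraph G := hhub.isSplitGraph hxy <|
    isClique_diff_singleton_of_forall_adj fun v hv hvy hvx => hcore v hv hvx hvy
  have hsize : ∀ M : Finset (Sym2 V), IsMaximalMatching G M → #M = (n - r) / 2 := by
    intro M hM
    obtain ⟨l, hl⟩ : (leaves G).Nonempty := card_pos.1 (hr1.trans_eq hr)
    have h2 := hhub.two_mul_card_of_isMaximalMatching (notMem_compl.2 hl) (hleaf l hl)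
      (isClique_diff_singleton_of_forall_adj hcore) (hcard ▸ heven) hM
    omega
  exact ⟨⟨fun M₁ M₂ h₁ h₂ => (hsize M₁ h₁).trans (hsize M₂ h₂).symm, hsplit⟩, hsize⟩

theorem stmt_13 {V : Type*} [Fintype V] [DecidableEq V]
    (G : SimpleGraph V) [DecidableRel G.Adj]
    (n : ℕ) (hn : Fintype.card V = n) (hn4 : 4 ≤ n)
    (hNoIso : ∀ v : V, ∃ w : V, G.Adj v w)
    (r p : ℕ)
    (hr : r = (Finset.univ.filter fun v : V => G.degree v = 1).card)
    (hp : p = (Finset.univ.filter fun v : V => G.degree v = n - 1).card)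
    (hp0 : p = 0) (hr2 : 2 ≤ r) (heven : Even (n - r))
    (x y : V) (hxy : x ≠ y) (hadj : ¬ G.Adj x y)
    (hdx : G.degree x = n - 2) (hdy : G.degree y = n - r - 2)
    (hdeg : ∀ v : V, v ≠ x → v ≠ y → (G.degree v = 1 ∨ G.degree v = n - r - 1)) :
    (Equimatchable G ∧ IsSplitGraph G) ∧
      ∀ M : Finset (Sym2 V), IsMaximalMatching G M → M.card = (n - r) / 2 :=
  stmt_13_general G n hn hn4 r hr (by omega) heven x y hxy hadj hdx hdy hdeg
end

section
/- Let G be a finite simple undirected graph on n ≥ 4 vertices with no isolated vertices, and let p be the number of vertices of G of degree n − 1. If n is odd and there exist two vertices x and y with d(x) + d(y) = p + n − 2 such that every vertex other than x and y has degree n − 1 or n − 2, then G is an equimatchable split graph. -/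
open Finset

variable {V : Type*}

/-! Pass to the complement `H = Gᶜ`, whose non-isolated vertices are exactly the non-universal
vertices of `G`. There every vertex other than `x` and `y` has degree at most one, so `H` is
triangle-free: a maximal matching of `G` leaves at most two vertices uncovered, hence exactly one
since `n` is odd. The degree condition says that `x` and `y` together have as many neighbours in `H`
as `H` has non-isolated vertices. As `x` and `y` have no common neighbour, every non-isolated vertex
is a neighbour of one of them, so `{x, y}` meets every edge of `H` and, unless `H` has no edge at
all, `x` and `y` are themselves adjacent in `H`. -/

section Matching

variable [DecidableEq V] {G : SimpleGraph V} {M : Finset (Sym2 V)}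

/-- The set of endpoints of the edges in `M`, that is, the vertices covered by `M`. -/
def coveredVerts (M : Finset (Sym2 V)) : Finset V :=
  M.biUnion Sym2.toFinset

theorem IsMatching.card_coveredVerts (hM : IsMatching G M) : #(coveredVerts M) = 2 * #M := by
  have hdisj : (M : Set (Sym2 V)).PairwiseDisjoint Sym2.toFinset := fun e he f hf hef =>
    Finset.disjoint_left.2 fun v hve hvf =>
      hM.2 e he f hf hef v (Sym2.mem_toFinset.1 hve) (Sym2.mem_toFinset.1 hvf)
  have hcard : ∀ e ∈ M, #e.toFinset = 2 := fun e he =>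
    Sym2.card_toFinset_of_not_isDiag e (G.not_isDiag_of_mem_edgeSet (hM.1 he))
  rw [coveredVerts, Finset.card_biUnion hdisj, Finset.sum_const_nat hcard, mul_comm]

theorem IsMaximalMatching.isIndepSet_compl_coveredVerts (hM : IsMaximalMatching G M) :
    G.IsIndepSet (coveredVerts M : Set V)ᶜ := by
  intro a ha b hb _ hab
  obtain ⟨f, hfM, v, hvab, hvf⟩ := hM.2 s(a, b) hab
  have hv : v ∈ coveredVerts M := Finset.mem_biUnion.2 ⟨f, hfM, Sym2.mem_toFinset.2 hvf⟩
  rcases Sym2.mem_iff.1 hvab with rfl | rfl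
  exacts [ha hv, hb hv]

theorem IsMaximalMatching.card_compl_coveredVerts_lt [Fintype V] {k : ℕ}
    (hM : IsMaximalMatching G M) (hG : G.IndepSetFree k) : #(coveredVerts M)ᶜ < k := by
  by_contra! hk
  obtain ⟨s, hs, hsk⟩ := Finset.exists_subset_card_eq hk
  refine hG s ⟨hM.isIndepSet_compl_coveredVerts.mono ?_, hsk⟩
  simpa only [Finset.coe_compl] using Finset.coe_subset.2 hs

end Matching

theorem equimatchable_of_odd_card_of_indepSetFree_three [Fintype V] {G : SimpleGraph V}
    (hodd : Odd (Fintype.card V)) (hG : G.IndepSetFree 3) : Equimatchable G := by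
  classical
  have two_mul_card_add_one {M : Finset (Sym2 V)} (hM : IsMaximalMatching G M) :
      2 * #M + 1 = Fintype.card V := by
    have hcovered := hM.1.card_coveredVerts
    have huncovered := hM.card_compl_coveredVerts_lt hG
    have hsum := Finset.card_add_card_compl (coveredVerts M)
    obtain ⟨m, hm⟩ := hodd
    lia
  intro M₁ M₂ hM₁ hM₂
  have h₁ := two_mul_card_add_one hM₁
  have h₂ := two_mul_card_add_one hM₂
  lia

theorem cliqueFree_succ_of_card_le_of_degree_lt {H : SimpleGraph V} [H.LocallyFinite]
    {T : Finset V} {k : ℕ} (hT : #T ≤ k) (hdeg : ∀ v ∉ T, H.degree v < k) :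
    H.CliqueFree (k + 1) := by
  classical
  intro s hs
  obtain ⟨v, hvs, hvT⟩ : ∃ v ∈ s, v ∉ T :=
    Finset.exists_mem_notMem_of_card_lt_card (by rw [hs.card_eq]; lia)
  have hsub : s.erase v ⊆ H.neighborFinset v := fun w hw =>
    (H.mem_neighborFinset v w).2 <|
      hs.isClique hvs (Finset.mem_of_mem_erase hw) (Finset.ne_of_mem_erase hw).symm
  have hle := Finset.card_le_card hsub
  rw [Finset.card_erase_of_mem hvs, hs.card_eq, H.card_neighborFinset_eq_degree] at hle
  exact (hdeg v hvT).not_ge hle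

section NeighborSetPair

variable {H : SimpleGraph V} {x y : V}

theorem disjoint_neighborSet_of_subsingleton (hxy : x ≠ y)
    (hleaf : ∀ v, v ≠ x → v ≠ y → (H.neighborSet v).Subsingleton) :
    Disjoint (H.neighborSet x) (H.neighborSet y) :=
  Set.disjoint_left.2 fun v hxv hyv => hxy (hleaf v hxv.ne' hyv.ne' hxv.symm hyv.symm)

theorem neighborSet_union_eq_support_of_disjoint [Finite V] [H.LocallyFinite]
    (hdisj : Disjoint (H.neighborSet x) (H.neighborSet y))
    (hcard : H.support.ncard ≤ H.degree x + H.degree y) :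
    H.neighborSet x ∪ H.neighborSet y = H.support := by
  have hsub : H.neighborSet x ∪ H.neighborSet y ⊆ H.support :=
    Set.union_subset (H.neighborSet_subset_support x) (H.neighborSet_subset_support y)
  refine Set.eq_of_subset_of_ncard_le hsub ?_
  simpa only [Set.ncard_union_eq hdisj, Set.ncard_eq_toFinset_card', Set.toFinset_card,
    H.card_neighborSet_eq_degree] using hcard

theorem isVertexCover_pair_of_neighborSet_union_eq_support
    (hleaf : ∀ v, v ≠ x → v ≠ y → (H.neighborSet v).Subsingleton)
    (hunion : H.neighborSet x ∪ H.neighborSet y = H.support) : H.IsVertexCover {x, y} := by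
  intro u v huv
  by_cases hu : u = x ∨ u = y
  · exact Or.inl hu
  obtain ⟨hux, huy⟩ := not_or.1 hu
  have hadj : u ∈ H.neighborSet x ∪ H.neighborSet y := hunion ▸ huv.left_mem_support
  exact Or.inr <| hadj.imp (fun hxu => hleaf u hux huy huv hxu.symm)
    fun hyu => hleaf u hux huy huv hyu.symm

theorem adj_of_isVertexCover_pair_of_ne_bot (hH : H ≠ ⊥) (hcover : H.IsVertexCover {x, y})
    (hunion : H.neighborSet x ∪ H.neighborSet y = H.support) : H.Adj x y := by
  obtain ⟨u, v, huv⟩ := SimpleGraph.ne_bot_iff_exists_adj.1 hH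
  have hsupport : x ∈ H.support ∨ y ∈ H.support := by
    rcases hcover huv with (rfl | rfl) | (rfl | rfl)
    exacts [.inl huv.left_mem_support, .inr huv.left_mem_support,
      .inl huv.right_mem_support, .inr huv.right_mem_support]
  rw [← hunion] at hsupport
  rcases hsupport with (hxx | hyx) | (hxy | hyy)
  exacts [(H.irrefl hxx).elim, hyx.symm, hxy, (H.irrefl hyy).elim]

end NeighborSetPair

section Complement

variable {G : SimpleGraph V}

theorem isSplitGraph_of_isClique_of_isVertexCover_compl {I : Set V} (hclique : Gᶜ.IsClique I)
    (hcover : Gᶜ.IsVertexCover I) : IsSplitGraph G :=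
  ⟨Iᶜ, I, disjoint_compl_left, Set.compl_union_self I,
    G.isIndepSet_compl.1 (SimpleGraph.isIndepSet_compl_iff_isVertexCover.2 hcover),
    G.isClique_compl.1 hclique⟩

theorem support_compl_eq_compl_universalVerts : Gᶜ.support = G.universalVertsᶜ := by
  ext v
  rw [SimpleGraph.mem_support_iff_not_isIsolated, SimpleGraph.isIsolated_compl_iff_isUniversal]
  rfl

theorem card_filter_degree_add_ncard_support_compl [Fintype V] [DecidableRel G.Adj] :
    #{v | G.degree v = Fintype.card V - 1} + Gᶜ.support.ncard = Fintype.card V := by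
  have huniv : ({v | G.degree v = Fintype.card V - 1} : Finset V) = G.universalVerts := by
    simp only [G.degree_eq_card_sub_one, Finset.coe_filter_univ, SimpleGraph.universalVerts]
  rw [support_compl_eq_compl_universalVerts, ← huniv, ← Set.ncard_coe_finset,
    Set.ncard_add_ncard_compl, Nat.card_eq_fintype_card]

theorem isSplitGraph_of_ncard_support_compl_le [Finite V] [Gᶜ.LocallyFinite] {x y : V}
    (hxy : x ≠ y) (hdeg : ∀ v, v ≠ x → v ≠ y → Gᶜ.degree v ≤ 1)
    (hcard : Gᶜ.support.ncard ≤ Gᶜ.degree x + Gᶜ.degree y) : IsSplitGraph G := by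
  have hleaf : ∀ v, v ≠ x → v ≠ y → (Gᶜ.neighborSet v).Subsingleton := fun v hvx hvy => by
    simpa only [Gᶜ.coe_neighborFinset] using
      Finset.card_le_one_iff_subsingleton.1 (hdeg v hvx hvy)
  have hunion := neighborSet_union_eq_support_of_disjoint
    (disjoint_neighborSet_of_subsingleton hxy hleaf) hcard
  have hcover := isVertexCover_pair_of_neighborSet_union_eq_support hleaf hunion
  by_cases hbot : Gᶜ = ⊥
  · exact isSplitGraph_of_isClique_of_isVertexCover_compl SimpleGraph.isClique_empty
      (SimpleGraph.isVertexCover_empty.2 hbot)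
  · exact isSplitGraph_of_isClique_of_isVertexCover_compl
      (SimpleGraph.isClique_pair.2 fun _ => adj_of_isVertexCover_pair_of_ne_bot hbot hcover hunion)
      hcover

end Complement

theorem stmt_14 {V : Type*} [Fintype V] [DecidableEq V]
    (G : SimpleGraph V) [DecidableRel G.Adj]
    (n : ℕ) (hn : Fintype.card V = n) (hn4 : 4 ≤ n)
    (hNoIso : ∀ v : V, ∃ w : V, G.Adj v w)
    (p : ℕ)
    (hp : p = (Finset.univ.filter fun v : V => G.degree v = n - 1).card)
    (hodd : Odd n)
    (x y : V) (hxy : x ≠ y) (hsum : G.degree x + G.degree y = p + n - 2)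
    (hdeg : ∀ v : V, v ≠ x → v ≠ y → (G.degree v = n - 1 ∨ G.degree v = n - 2)) :
    Equimatchable G ∧ IsSplitGraph G := by
  subst hn
  have hdeg_compl : ∀ v, v ≠ x → v ≠ y → Gᶜ.degree v ≤ 1 := fun v hvx hvy => by
    rw [G.degree_compl]
    rcases hdeg v hvx hvy with h | h <;> lia
  have hcard : Gᶜ.support.ncard ≤ Gᶜ.degree x + Gᶜ.degree y := by
    have hsupport := card_filter_degree_add_ncard_support_compl (G := G)
    rw [G.degree_compl, G.degree_compl]
    lia
  have htriangle : Gᶜ.CliqueFree 3 :=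
    cliqueFree_succ_of_card_le_of_degree_lt (T := {x, y}) Finset.card_le_two fun v hv =>
      Nat.lt_succ_of_le <| hdeg_compl v (by grind) (by grind)
  exact ⟨equimatchable_of_odd_card_of_indepSetFree_three hodd (G.cliqueFree_compl.1 htriangle),
    isSplitGraph_of_ncard_support_compl_le hxy hdeg_compl hcard⟩
end

section
/- Let G be a finite simple undirected graph on n vertices with no isolated vertices admitting a split partition (K, I) where K is a clique, I is an independent set, |I| = 2, |K| ≥ 2, every vertex of K has at least one neighbor in I, and G is equimatchable. Let p be the number of vertices of G of degree n − 1 and write I = {x, y}. Then n is odd, every vertex of K has degree n − 2 or n − 1, and d(x) + d(y) = p + n − 2. -/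
open Finset

variable {V : Type*}

/-!
A matching saturating a vertex cover is maximal, so in an equimatchable graph all such matchings
saturate equally many vertices. If `|K|` were even, the clique `K` would have a perfect matching;
rerouting two of its vertices to distinct partners `x` and `y` leaves an even clique, and gives a
matching saturating `K ∪ {x, y}`, two vertices more. The degree sum is inclusion–exclusion for the
neighborhoods of `x` and `y`: their union is `K` and their intersection is the set of universal
vertices.
-/

theorem exists_ne_of_nontrivial_union {α : Type*} {A B : Set α} (hA : A.Nonempty)
    (hB : B.Nonempty) (h : (A ∪ B).Nontrivial) : ∃ a ∈ A, ∃ b ∈ B, a ≠ b := by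
  obtain ⟨b, hb⟩ := hB
  obtain ⟨c, hc, hcb⟩ := h.exists_ne b
  rcases hc with hcA | hcB
  · exact ⟨c, hcA, b, hb, hcb⟩
  · obtain ⟨a, ha⟩ := hA
    rcases eq_or_ne a b with rfl | hab
    · exact ⟨a, ha, c, hcB, hcb.symm⟩
    · exact ⟨a, ha, b, hb, hab⟩

section Matching

variable {G : SimpleGraph V} {M : G.Subgraph} {N : Finset (Sym2 V)}

theorem IsMatching.card_biUnion_toFinset [DecidableEq V] (hN : IsMatching G N) :
    #(N.biUnion Sym2.toFinset) = 2 * #N := by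
  have hdisj : (N : Set (Sym2 V)).PairwiseDisjoint Sym2.toFinset := by
    intro e he f hf hef
    simpa only [Finset.disjoint_left, Sym2.mem_toFinset] using hN.2 e he f hf hef
  have hcard : ∀ e ∈ N, #e.toFinset = 2 := fun e he ↦
    e.card_toFinset_of_not_isDiag (G.not_isDiag_of_mem_edgeSet (hN.1 he))
  rw [Finset.card_biUnion hdisj, Finset.sum_const_nat hcard, mul_comm]

theorem isMatching_of_coe_eq_edgeSet (hM : M.IsMatching) (hN : (N : Set (Sym2 V)) = M.edgeSet) :
    IsMatching G N := by
  refine ⟨hN ▸ M.edgeSet_subset, fun e he f hf hef v hve hvf ↦ hef ?_⟩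
  rw [← Finset.mem_coe, hN] at he hf
  obtain ⟨u, rfl⟩ := hve
  obtain ⟨w, rfl⟩ := hvf
  exact congrArg (s(v, ·)) (hM.eq_of_adj_left he hf)

theorem isMaximalMatching_of_coe_eq_edgeSet (hM : M.IsMatching)
    (hcover : G.IsVertexCover M.verts) (hN : (N : Set (Sym2 V)) = M.edgeSet) :
    IsMaximalMatching G N := by
  have hsat : ∀ v ∈ M.verts, ∃ f ∈ N, v ∈ f := by
    intro v hv
    obtain ⟨w, hvw, -⟩ := hM hv
    exact ⟨s(v, w), by rwa [← Finset.mem_coe, hN], Sym2.mem_mk_left v w⟩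
  refine ⟨isMatching_of_coe_eq_edgeSet hM hN, Sym2.ind fun u v huv ↦ ?_⟩
  rcases hcover huv with hu | hv
  · obtain ⟨f, hf, huf⟩ := hsat u hu
    exact ⟨f, hf, u, Sym2.mem_mk_left u v, huf⟩
  · obtain ⟨f, hf, hvf⟩ := hsat v hv
    exact ⟨f, hf, v, Sym2.mem_mk_right u v, hvf⟩

theorem ncard_verts_eq_two_mul_card (hM : M.IsMatching) (hN : (N : Set (Sym2 V)) = M.edgeSet) :
    M.verts.ncard = 2 * #N := by
  classical
  have hverts : M.verts = N.biUnion Sym2.toFinset := by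
    ext v
    simp [hM.verts_eq_biUnion_edgeSet, ← hN]
  rw [hverts, Set.ncard_coe_finset, (isMatching_of_coe_eq_edgeSet hM hN).card_biUnion_toFinset]

theorem finite_edgeSet_of_finite_verts (h : M.verts.Finite) : M.edgeSet.Finite := by
  refine ((h.prod h).image Sym2.mk.uncurry).subset ?_
  rw [← Set.sym2_eq_mk_image]
  exact fun e he ↦ Set.mem_sym2_iff_subset.2 fun v hv ↦ M.mem_verts_of_mem_edge he hv

theorem Equimatchable.ncard_verts_eq (hG : Equimatchable G) {M₁ M₂ : G.Subgraph}
    (h₁ : M₁.IsMatching) (h₂ : M₂.IsMatching) (hfin₁ : M₁.verts.Finite) (hfin₂ : M₂.verts.Finite)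
    (hcover₁ : G.IsVertexCover M₁.verts) (hcover₂ : G.IsVertexCover M₂.verts) :
    M₁.verts.ncard = M₂.verts.ncard := by
  obtain ⟨N₁, hN₁⟩ := (finite_edgeSet_of_finite_verts hfin₁).exists_finset_coe
  obtain ⟨N₂, hN₂⟩ := (finite_edgeSet_of_finite_verts hfin₂).exists_finset_coe
  rw [ncard_verts_eq_two_mul_card h₁ hN₁, ncard_verts_eq_two_mul_card h₂ hN₂,
    hG N₁ N₂ (isMaximalMatching_of_coe_eq_edgeSet h₁ hcover₁ hN₁)
      (isMaximalMatching_of_coe_eq_edgeSet h₂ hcover₂ hN₂)]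

theorem exists_isMatching_verts_eq_insert_insert (hM : M.IsMatching) {u v : V} (huv : G.Adj u v)
    (hu : u ∉ M.verts) (hv : v ∉ M.verts) :
    ∃ M' : G.Subgraph, M'.verts = insert u (insert v M.verts) ∧ M'.IsMatching := by
  have hedge := SimpleGraph.Subgraph.IsMatching.subgraphOfAdj huv
  refine ⟨G.subgraphOfAdj huv ⊔ M, by simp [Set.insert_union], hedge.sup hM ?_⟩
  rw [hedge.support_eq_verts, hM.support_eq_verts]
  simp [hu, hv]

end Matching

section CliqueVertexCover

variable {G : SimpleGraph V} {K : Finset V}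

theorem exists_isMatching_verts_eq_clique_insert_insert (hK : G.IsClique (K : Set V))
    (heven : Even #K) {x y a b : V} (hx : x ∉ K) (hy : y ∉ K) (hxy : x ≠ y) (ha : a ∈ K)
    (hb : b ∈ K) (hab : a ≠ b) (hxa : G.Adj x a) (hyb : G.Adj y b) :
    ∃ M : G.Subgraph, M.verts = insert x (insert y (K : Set V)) ∧ M.IsMatching := by
  classical
  have hb' : b ∈ K.erase a := Finset.mem_erase.2 ⟨hab.symm, hb⟩
  have heven' : Even ((K.erase a).erase b : Set V).ncard := by
    rw [Set.ncard_coe_finset, Finset.card_erase_of_mem hb', Finset.card_erase_of_mem ha]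
    exact heven.tsub even_two
  have hsub : (((K.erase a).erase b : Finset V) : Set V) ⊆ K :=
    Finset.coe_subset.2 ((Finset.erase_subset _ _).trans (Finset.erase_subset _ _))
  obtain ⟨M₀, hverts₀, hM₀⟩ :=
    ((hK.subset hsub).even_iff_exists_isMatching (Finset.finite_toSet _)).1 heven'
  obtain ⟨M₁, hverts₁, hM₁⟩ :=
    exists_isMatching_verts_eq_insert_insert hM₀ hyb (by simp [hverts₀, hy]) (by simp [hverts₀])
  rw [hverts₀, ← Finset.coe_insert, Finset.insert_erase hb'] at hverts₁
  obtain ⟨M₂, hverts₂, hM₂⟩ :=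
    exists_isMatching_verts_eq_insert_insert hM₁ hxa (by simp [hverts₁, hx, hxy])
      (by simp [hverts₁, ne_of_mem_of_not_mem ha hy])
  rw [hverts₁, Set.insert_comm a, ← Finset.coe_insert, Finset.insert_erase ha] at hverts₂
  exact ⟨M₂, hverts₂, hM₂⟩

theorem Equimatchable.odd_card_of_isClique_of_isVertexCover (hG : Equimatchable G)
    (hK : G.IsClique (K : Set V)) (hcover : G.IsVertexCover (K : Set V)) {x y a b : V}
    (hx : x ∉ K) (hy : y ∉ K) (hxy : x ≠ y) (ha : a ∈ K) (hb : b ∈ K) (hab : a ≠ b)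
    (hxa : G.Adj x a) (hyb : G.Adj y b) : Odd #K := by
  classical
  by_contra hodd
  have heven : Even #K := Nat.not_odd_iff_even.1 hodd
  obtain ⟨M₁, hverts₁, hM₁⟩ := (hK.even_iff_exists_isMatching K.finite_toSet).1
    (by rwa [Set.ncard_coe_finset])
  obtain ⟨M₂, hverts₂, hM₂⟩ :=
    exists_isMatching_verts_eq_clique_insert_insert hK heven hx hy hxy ha hb hab hxa hyb
  rw [← Finset.coe_insert, ← Finset.coe_insert] at hverts₂
  have hcover₂ : G.IsVertexCover M₂.verts := hcover.subset <| by
    rw [hverts₂, Finset.coe_subset]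
    exact (Finset.subset_insert _ _).trans (Finset.subset_insert _ _)
  have hcard := hG.ncard_verts_eq hM₁ hM₂ (by simp [hverts₁]) (by simp [hverts₂])
    (hverts₁ ▸ hcover) hcover₂
  rw [hverts₁, hverts₂, Set.ncard_coe_finset, Set.ncard_coe_finset,
    Finset.card_insert_of_notMem (by simp [hx, hxy]), Finset.card_insert_of_notMem hy] at hcard
  omega

theorem Equimatchable.odd_card_of_neighborSet_union_eq (hG : Equimatchable G)
    (hK : G.IsClique (K : Set V)) (hcover : G.IsVertexCover (K : Set V)) (hcard : 1 < #K)
    {x y : V} (hx : x ∉ K) (hy : y ∉ K) (hxy : x ≠ y) (hNx : (G.neighborSet x).Nonempty)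
    (hNy : (G.neighborSet y).Nonempty) (hunion : G.neighborSet x ∪ G.neighborSet y = K) :
    Odd #K := by
  obtain ⟨a, hxa, b, hyb, hab⟩ := exists_ne_of_nontrivial_union hNx hNy
    (hunion ▸ Finset.one_lt_card_iff_nontrivial.1 hcard)
  have ha : a ∈ K := (hcover hxa).resolve_left hx
  have hb : b ∈ K := (hcover hyb).resolve_left hy
  exact hG.odd_card_of_isClique_of_isVertexCover hK hcover hx hy hxy ha hb hab hxa hyb

theorem card_le_degree_of_isClique (hK : G.IsClique (K : Set V)) {k i : V}
    [Fintype (G.neighborSet k)] (hk : k ∈ K) (hi : i ∉ K) (hki : G.Adj k i) :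
    #K ≤ G.degree k := by
  classical
  have hsub : insert i (K.erase k) ⊆ G.neighborFinset k := by
    intro v hv
    rw [SimpleGraph.mem_neighborFinset]
    rcases Finset.mem_insert.1 hv with rfl | hv
    · exact hki
    · exact hK hk (Finset.mem_of_mem_erase hv) (Finset.ne_of_mem_erase hv).symm
  calc #K = #(insert i (K.erase k)) := by
        rw [Finset.card_insert_of_notMem (fun h ↦ hi (Finset.mem_of_mem_erase h)),
          Finset.card_erase_add_one hk]
    _ ≤ G.degree k := Finset.card_le_card hsub

theorem isUniversal_iff_forall_notMem_adj {C : Set V} (hC : G.IsClique C)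
    (hcover : G.IsVertexCover C) (hcompl : Cᶜ.Nontrivial) {v : V} :
    G.IsUniversal v ↔ ∀ i ∉ C, G.Adj v i := by
  constructor
  · refine fun hv i hi ↦ hv ?_
    rintro rfl
    obtain ⟨j, hj, hjv⟩ := hcompl.exists_ne v
    exact (hcover (hv hjv.symm)).elim hi hj
  · intro hv w hvw
    have hvC : v ∈ C := by_contra fun h ↦ G.irrefl (hv v h)
    by_cases hw : w ∈ C
    · exact hC hvC hw hvw
    · exact hv w hw

variable [Fintype V] [DecidableEq V] [DecidableRel G.Adj]

theorem biUnion_compl_neighborFinset_eq (hcover : G.IsVertexCover (K : Set V))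
    (hK : ∀ k ∈ K, ∃ i ∉ K, G.Adj k i) : Kᶜ.biUnion (fun i ↦ G.neighborFinset i) = K := by
  ext v
  simp only [Finset.mem_biUnion, Finset.mem_compl, SimpleGraph.mem_neighborFinset]
  constructor
  · rintro ⟨i, hi, hiv⟩
    exact (hcover hiv).resolve_left hi
  · intro hv
    obtain ⟨i, hi, hvi⟩ := hK v hv
    exact ⟨i, hi, hvi.symm⟩

theorem neighborFinset_inter_neighborFinset_eq_filter_degree (hK : G.IsClique (K : Set V))
    (hcover : G.IsVertexCover (K : Set V)) {x y : V} (hxy : x ≠ y) (hcompl : Kᶜ = {x, y}) :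
    G.neighborFinset x ∩ G.neighborFinset y =
      univ.filter fun v ↦ G.degree v = Fintype.card V - 1 := by
  have hnontrivial : (K : Set V)ᶜ.Nontrivial := by
    rw [← Finset.coe_compl, hcompl, Finset.coe_pair]
    exact Set.nontrivial_pair hxy
  have hmem : ∀ i, i ∉ K ↔ i = x ∨ i = y := fun i ↦ by rw [← Finset.mem_compl, hcompl]; simp
  ext v
  simp [isUniversal_iff_forall_notMem_adj hK hcover hnontrivial, hmem, G.adj_comm v]

theorem degree_add_degree_eq_card_add_card_filter_degree (hK : G.IsClique (K : Set V))
    (hcover : G.IsVertexCover (K : Set V)) {x y : V} (hxy : x ≠ y) (hcompl : Kᶜ = {x, y})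
    (hunion : G.neighborFinset x ∪ G.neighborFinset y = K) :
    G.degree x + G.degree y = #K + #(univ.filter fun v ↦ G.degree v = Fintype.card V - 1) := by
  rw [← neighborFinset_inter_neighborFinset_eq_filter_degree hK hcover hxy hcompl, ← hunion,
    card_union_add_card_inter, G.card_neighborFinset_eq_degree, G.card_neighborFinset_eq_degree]

end CliqueVertexCover

theorem stmt_15 {V : Type*} [Fintype V] [DecidableEq V]
    (G : SimpleGraph V) [DecidableRel G.Adj]
    (n : ℕ) (hn : Fintype.card V = n)
    (hNoIso : ∀ v : V, ∃ w : V, G.Adj v w)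
    (K I : Finset V)
    (hdisj : Disjoint K I) (hcover : K ∪ I = Finset.univ)
    (hclique : G.IsClique (K : Set V)) (hindep : IsIndepSet G (I : Set V))
    (hKI : ∀ k ∈ K, ∃ i ∈ I, G.Adj k i)
    (hK2 : 2 ≤ K.card) (hEq : Equimatchable G)
    (x y : V) (hxy : x ≠ y) (hI2 : I = {x, y})
    (p : ℕ)
    (hp : p = (Finset.univ.filter fun v : V => G.degree v = n - 1).card) :
    Odd n ∧ (∀ k ∈ K, G.degree k = n - 2 ∨ G.degree k = n - 1) ∧
      G.degree x + G.degree y = p + n - 2 := by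
  subst hn hI2 hp
  have hcompl : Kᶜ = {x, y} := IsCompl.compl_eq ⟨hdisj, codisjoint_iff.2 hcover⟩
  have hvc : G.IsVertexCover (K : Set V) := by
    rwa [← SimpleGraph.isIndepSet_compl_iff_isVertexCover, ← Finset.coe_compl, hcompl]
  have hout : ∀ k ∈ K, ∃ i ∉ K, G.Adj k i := by simpa only [← Finset.mem_compl, hcompl] using hKI
  have hunion : G.neighborFinset x ∪ G.neighborFinset y = K := by
    simpa [hcompl] using biUnion_compl_neighborFinset_eq hvc hout
  have hcard : Fintype.card V = #K + 2 := by
    rw [← K.card_add_card_compl, hcompl, Finset.card_pair hxy]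
  refine ⟨?_, fun k hk ↦ ?_, ?_⟩
  · have hodd : Odd #K := hEq.odd_card_of_neighborSet_union_eq hclique hvc hK2
      (by simp [← Finset.mem_compl, hcompl]) (by simp [← Finset.mem_compl, hcompl]) hxy
      (hNoIso x) (hNoIso y) (by simp [← hunion])
    exact hcard ▸ hodd.add_even even_two
  · obtain ⟨i, hi, hki⟩ := hout k hk
    have hlower := card_le_degree_of_isClique hclique hk hi hki
    have hupper := G.degree_lt_card_verts k
    omega
  · have hsum := degree_add_degree_eq_card_add_card_filter_degree hclique hvc hxy hcompl hunion
    omega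
end

section
/- Let G be a finite simple undirected graph on n ≥ 4 vertices with no isolated vertices, let p be the number of vertices of G of degree n − 1, and let (v₁, v₂, …, vₙ) be an ordering of the vertices of G with non-decreasing degrees. If G is an equimatchable split graph and 2 ≤ d(v₂) ≤ n − 2, then n is odd, d(v₃) ≥ n − 2, and d(v₁) + d(v₂) = p + n − 2. -/
open Finset

variable {V : Type*}

/-!
Extend the clique of the split partition to a maximal clique `K`. If a set `B` of outside vertices
can be matched into `K` and `|K| + |B|` is even, then pairing up the rest of `K` gives a maximal
matching covering exactly `K ∪ B`, so equimatchability determines `|B|` from the parity of `|K|`.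
Hence two outside vertices are never matched simultaneously if `|K|` is even, nor three if `|K|` is
odd. Since at most one vertex has degree one, Hall's theorem then leaves at most one, respectively
two, outside vertices. If `|K|` is odd, every `u` in `K` moreover has an outside neighbour:
otherwise a perfect matching of `K \ {u}` would be a maximal matching that is too small.
In both cases `G` is a clique together with two non-adjacent vertices `x`, `y` such that every
clique vertex sees `x` or `y`, and inclusion-exclusion for the neighbourhoods of `x` and `y` gives
the degree identity.
-/

variable {G : SimpleGraph V} {K B : Set V} {x y : V}

section Split

lemma IsSplitGraph.exists_maximal_isClique [Finite V] (h : IsSplitGraph G) :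
    ∃ K : Set V, Maximal G.IsClique K ∧ IsIndepSet G Kᶜ := by
  obtain ⟨C, I, -, hCI, hC, hI⟩ := h
  obtain ⟨K, hCK, hK⟩ := Finite.exists_le_maximal hC
  have hKI : Kᶜ ⊆ I := by
    rw [Set.compl_subset_iff_union, ← Set.univ_subset_iff, ← hCI]
    exact Set.union_subset_union_left I hCK
  exact ⟨K, hK, hI.mono hKI⟩

lemma exists_not_adj_of_maximal_isClique (hK : Maximal G.IsClique K) (hx : x ∉ K) :
    ∃ y ∈ K, ¬ G.Adj x y := by
  by_contra! hadj
  exact hx (hK.le_of_ge (hK.prop.insert fun y hy _ => hadj y hy) (Set.subset_insert x K)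
    (Set.mem_insert x K))

lemma IsIndepSet.mem_of_adj (hI : IsIndepSet G Kᶜ) (hx : x ∉ K) (hxy : G.Adj x y) : y ∈ K := by
  by_contra hy
  exact hI hx hy hxy.ne hxy

end Split

section Matching

lemma isMaximalMatching_of_coe_eq_edgeSet_s17 {M : G.Subgraph} (hM : M.IsMatching)
    (hI : IsIndepSet G M.vertsᶜ) {E : Finset (Sym2 V)} (hE : (E : Set (Sym2 V)) = M.edgeSet) :
    IsMaximalMatching G E := by
  have mem_E {e : Sym2 V} : e ∈ E ↔ e ∈ M.edgeSet := by rw [← hE, mem_coe]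
  refine ⟨⟨hE ▸ M.edgeSet_subset, fun e he f hf hef v hve hvf => hef ?_⟩, ?_⟩
  · obtain ⟨a, rfl⟩ := hve
    obtain ⟨b, rfl⟩ := hvf
    exact congrArg (s(v, ·)) (hM.eq_of_adj_left (mem_E.1 he) (mem_E.1 hf))
  · rintro ⟨a, b⟩ hab
    obtain ⟨v, hv, hvM⟩ : ∃ v ∈ s(a, b), v ∈ M.verts := by
      by_cases ha : a ∈ M.verts
      · exact ⟨a, Sym2.mem_mk_left a b, ha⟩
      · exact ⟨b, Sym2.mem_mk_right a b, hI.mem_of_adj ha hab⟩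
    obtain ⟨w, hvw, -⟩ := hM hvM
    exact ⟨s(v, w), mem_E.2 hvw, v, hv, Sym2.mem_mk_left v w⟩

lemma two_mul_ncard_edgeSet_of_isMatching [Finite V] {M : G.Subgraph} (hM : M.IsMatching) :
    2 * M.edgeSet.ncard = M.verts.ncard := by
  classical
  have := Fintype.ofFinite V
  have hdeg (v : V) : M.spanningCoe.degree v = if v ∈ M.verts then 1 else 0 := by
    rw [M.degree_spanningCoe]
    split_ifs with hv
    · exact SimpleGraph.Subgraph.isMatching_iff_forall_degree.1 hM v hv
    · exact SimpleGraph.Subgraph.degree_of_notMem_verts hv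
  rw [← M.edgeSet_spanningCoe, ← SimpleGraph.coe_edgeFinset, Set.ncard_coe_finset,
    ← SimpleGraph.sum_degrees_eq_twice_card_edges, sum_congr rfl fun v _ => hdeg v, sum_boole,
    Nat.cast_id, Set.ncard_eq_toFinset_card', Set.filter_mem_univ_eq_toFinset]

lemma Equimatchable.ncard_verts_eq_s17 [Finite V] (hEq : Equimatchable G) {M N : G.Subgraph}
    (hM : M.IsMatching) (hN : N.IsMatching) (hMI : IsIndepSet G M.vertsᶜ)
    (hNI : IsIndepSet G N.vertsᶜ) : M.verts.ncard = N.verts.ncard := by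
  have hcard := hEq _ _
    (isMaximalMatching_of_coe_eq_edgeSet_s17 hM hMI (Set.toFinite M.edgeSet).coe_toFinset)
    (isMaximalMatching_of_coe_eq_edgeSet_s17 hN hNI (Set.toFinite N.edgeSet).coe_toFinset)
  rw [← Set.ncard_eq_toFinset_card, ← Set.ncard_eq_toFinset_card] at hcard
  rw [← two_mul_ncard_edgeSet_of_isMatching hM, ← two_mul_ncard_edgeSet_of_isMatching hN, hcard]

end Matching

section Hall

/-- The vertices of `B` have a system of distinct representatives among their neighbours. When the
neighbours of `B` lie outside `B`, this says that some matching of `G` covers `B`. -/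
def HasDistinctNeighbors (G : SimpleGraph V) (B : Set V) : Prop :=
  ∃ f : B → V, f.Injective ∧ ∀ b : B, G.Adj b (f b)

lemma HasDistinctNeighbors.mono {C : Set V} (hB : HasDistinctNeighbors G B) (hCB : C ⊆ B) :
    HasDistinctNeighbors G C := by
  obtain ⟨f, hf, hadj⟩ := hB
  exact ⟨f ∘ Set.inclusion hCB, hf.comp (Set.inclusion_injective hCB),
    fun c => hadj (Set.inclusion hCB c)⟩

lemma hasDistinctNeighbors_singleton (hxy : G.Adj x y) : HasDistinctNeighbors G {x} :=
  ⟨fun _ => y, Function.injective_of_subsingleton _, by rintro ⟨_, rfl⟩; exact hxy⟩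

variable [DecidableEq V] [G.LocallyFinite]

lemma hasDistinctNeighbors_of_forall_card_le {B : Finset V}
    (hB : ∀ S ⊆ B, #S ≤ #(S.biUnion (G.neighborFinset ·))) : HasDistinctNeighbors G B := by
  have hall (S : Finset (B : Set V)) : #S ≤ #(S.biUnion fun b => G.neighborFinset b) := by
    have hSB : S.map (.subtype _) ⊆ B := map_subtype_subset S
    have hle := hB _ hSB
    rw [card_map, map_eq_image, image_biUnion] at hle
    exact hle
  obtain ⟨f, hf, hadj⟩ := (all_card_le_biUnion_card_iff_exists_injective _).1 hall
  exact ⟨f, hf, fun b => (G.mem_neighborFinset b (f b)).1 (hadj b)⟩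

lemma two_le_card_biUnion_neighborFinset (hsub : {u | G.degree u ≤ 1}.Subsingleton)
    {S : Finset V} (hS : 1 < #S) : 2 ≤ #(S.biUnion (G.neighborFinset ·)) := by
  obtain ⟨a, ha, b, hb, hab⟩ := one_lt_card.1 hS
  obtain ⟨u, hu, hdeg⟩ : ∃ u ∈ S, 2 ≤ G.degree u := by
    by_contra! hlt
    exact hab (hsub (Nat.le_of_lt_succ (hlt a ha)) (Nat.le_of_lt_succ (hlt b hb)))
  exact hdeg.trans (card_le_card (subset_biUnion_of_mem (G.neighborFinset ·) hu))

lemma hasDistinctNeighbors_of_card_le_three (hpos : ∀ u, 0 < G.degree u)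
    (hsub : {u | G.degree u ≤ 1}.Subsingleton) {B : Finset V} (hB : #B ≤ 3)
    (hN : #B ≤ #(B.biUnion (G.neighborFinset ·))) : HasDistinctNeighbors G B := by
  refine hasDistinctNeighbors_of_forall_card_le fun S hSB => ?_
  obtain rfl | hne := eq_or_ne S B
  · exact hN
  have hS : #S < #B := card_lt_card (hSB.ssubset_of_ne hne)
  obtain hS1 | hS1 := lt_or_ge 1 #S
  · exact (by lia : #S ≤ 2).trans (two_le_card_biUnion_neighborFinset hsub hS1)
  obtain rfl | ⟨u, hu⟩ := S.eq_empty_or_nonempty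
  · exact zero_le
  · have hle := card_le_card (subset_biUnion_of_mem (G.neighborFinset ·) hu)
    exact hS1.trans ((hpos u).trans_le hle)

end Hall

section CliqueComplement

variable [Finite V]

lemma exists_isMatching_verts_eq_union (hK : G.IsClique K) (hI : IsIndepSet G Kᶜ) (hBK : B ⊆ Kᶜ)
    (hB : HasDistinctNeighbors G B) (heven : Even (K.ncard + B.ncard)) :
    ∃ M : G.Subgraph, M.verts = K ∪ B ∧ M.IsMatching := by
  obtain ⟨f, hf, hadj⟩ := hB
  have hfK : Set.range f ⊆ K := Set.range_subset_iff.2 fun b => hI.mem_of_adj (hBK b.2) (hadj b)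
  have hdisj : Disjoint B K := Set.subset_compl_iff_disjoint_right.1 hBK
  obtain ⟨M, hMverts, hM⟩ := SimpleGraph.Subgraph.IsMatching.exists_of_disjoint_sets_of_equiv
    (hdisj.mono_right hfK) (Equiv.ofInjective f hf) hadj
  have hrest : Even (K \ Set.range f).ncard := by
    have hcard := Set.ncard_sdiff_add_ncard_of_subset hfK
    rw [Set.ncard_range_of_injective hf, Nat.card_coe_set_eq] at hcard
    grind
  obtain ⟨N, hNverts, hN⟩ :=
    ((hK.subset Set.sdiff_subset).even_iff_exists_isMatching (Set.toFinite _)).1 hrest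
  refine ⟨M ⊔ N, ?_, hM.sup hN ?_⟩
  · rw [SimpleGraph.Subgraph.verts_sup, hMverts, hNverts, Set.union_assoc,
      Set.union_sdiff_cancel hfK, Set.union_comm]
  · rw [hM.support_eq_verts, hN.support_eq_verts, hMverts, hNverts, Set.disjoint_union_left]
    exact ⟨hdisj.mono_right Set.sdiff_subset, Set.disjoint_sdiff_right⟩

lemma Equimatchable.ncard_eq_of_even (hEq : Equimatchable G) (hK : G.IsClique K)
    (hI : IsIndepSet G Kᶜ) {C : Set V} (hBK : B ⊆ Kᶜ) (hCK : C ⊆ Kᶜ)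
    (hB : HasDistinctNeighbors G B) (hC : HasDistinctNeighbors G C)
    (hBeven : Even (K.ncard + B.ncard)) (hCeven : Even (K.ncard + C.ncard)) :
    B.ncard = C.ncard := by
  have hcard {D : Set V} (hDK : D ⊆ Kᶜ) : (K ∪ D).ncard = K.ncard + D.ncard :=
    Set.ncard_union_eq (Set.subset_compl_iff_disjoint_left.1 hDK)
  have hindep (D : Set V) : IsIndepSet G (K ∪ D)ᶜ :=
    hI.mono (Set.compl_subset_compl.2 Set.subset_union_left)
  obtain ⟨M, hMverts, hM⟩ := exists_isMatching_verts_eq_union hK hI hBK hB hBeven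
  obtain ⟨N, hNverts, hN⟩ := exists_isMatching_verts_eq_union hK hI hCK hC hCeven
  have hMN := hEq.ncard_verts_eq_s17 hM hN (hMverts ▸ hindep B) (hNverts ▸ hindep C)
  rwa [hMverts, hNverts, hcard hBK, hcard hCK, Nat.add_left_cancel_iff] at hMN

lemma Equimatchable.ncard_le_one_of_even (hEq : Equimatchable G) (hK : G.IsClique K)
    (hI : IsIndepSet G Kᶜ) (hBK : B ⊆ Kᶜ) (hB : HasDistinctNeighbors G B)
    (heven : Even (K.ncard + B.ncard)) : B.ncard ≤ 1 := by
  obtain ⟨C, hCB, hC, hCeven⟩ : ∃ C ⊆ B, C.ncard ≤ 1 ∧ Even (K.ncard + C.ncard) := by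
    obtain hBeven | hBodd := Nat.even_or_odd B.ncard
    · exact ⟨∅, Set.empty_subset B, by simp, by simpa using (Nat.even_add.1 heven).2 hBeven⟩
    · obtain ⟨b, hb⟩ := Set.nonempty_of_ncard_ne_zero hBodd.pos.ne'
      exact ⟨{b}, Set.singleton_subset_iff.2 hb, (Set.ncard_singleton b).le, by
        rw [Set.ncard_singleton]; grind⟩
  exact (hEq.ncard_eq_of_even hK hI hBK (hCB.trans hBK) hB (hB.mono hCB) heven hCeven).trans_le hC

lemma Equimatchable.exists_adj_of_odd (hEq : Equimatchable G) (hK : G.IsClique K)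
    (hI : IsIndepSet G Kᶜ) (hodd : Odd K.ncard) (hx : x ∉ K) {z : V} (hxz : G.Adj x z)
    (hy : y ∈ K) : ∃ w ∉ K, G.Adj y w := by
  by_contra! hnadj
  have hycard : (K \ {y}).ncard + 1 = K.ncard := Set.ncard_sdiff_singleton_add_one hy
  have hxcard : (K ∪ {x}).ncard = K.ncard + 1 := by
    rw [Set.union_singleton, Set.ncard_insert_of_notMem hx]
  obtain ⟨M, hMverts, hM⟩ := exists_isMatching_verts_eq_union hK hI
    (Set.singleton_subset_iff.2 hx) (hasDistinctNeighbors_singleton hxz)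
    (by rw [Set.ncard_singleton]; exact hodd.add_one)
  obtain ⟨N, hNverts, hN⟩ :=
    ((hK.subset Set.sdiff_subset).even_iff_exists_isMatching (Set.toFinite (K \ {y}))).1 (by grind)
  have hMI : IsIndepSet G M.vertsᶜ :=
    hMverts ▸ hI.mono (Set.compl_subset_compl.2 Set.subset_union_left)
  have hNI : IsIndepSet G N.vertsᶜ := by
    have hcompl : N.vertsᶜ = insert y Kᶜ := by
      rw [hNverts, Set.compl_sdiff, Set.singleton_union]
    rw [hcompl]
    exact hI.insert fun w hw _ => ⟨hnadj w hw, fun h => hnadj w hw h.symm⟩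
  have hMN := hEq.ncard_verts_eq_s17 hM hN hMI hNI
  rw [hMverts, hNverts] at hMN
  lia

end CliqueComplement

section Structure

/-- Two distinct non-adjacent vertices `x`, `y` such that all other vertices form a clique each
of whose members is adjacent to `x` or `y`. This is the shape forced on a non-complete equimatchable
split graph without isolated vertices and with at most one vertex of degree one. -/
structure IsCliqueDominatingPair (G : SimpleGraph V) (x y : V) : Prop where
  ne : x ≠ y
  not_adj : ¬ G.Adj x y
  isClique : G.IsClique {x, y}ᶜ
  adj_or_adj : ∀ u, u ≠ x → u ≠ y → G.Adj x u ∨ G.Adj y u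

lemma exists_isCliqueDominatingPair_of_compl_eq_singleton (hK : Maximal G.IsClique K)
    (hKx : Kᶜ = {x}) : ∃ y, IsCliqueDominatingPair G x y := by
  have hx : x ∉ K := Set.mem_compl_iff K x |>.1 (hKx ▸ Set.mem_singleton x)
  have mem_K {u : V} (hu : u ≠ x) : u ∈ K := by
    rw [← Set.notMem_compl_iff, hKx]
    exact hu
  obtain ⟨y, hy, hxy⟩ := exists_not_adj_of_maximal_isClique hK hx
  exact ⟨y,
    { ne := (ne_of_mem_of_not_mem hy hx).symm
      not_adj := hxy
      isClique := hK.prop.subset fun u hu => mem_K (not_or.1 hu).1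
      adj_or_adj := fun u hux huy => .inr (hK.prop hy (mem_K hux) huy.symm) }⟩

lemma isCliqueDominatingPair_of_compl_eq_pair (hK : G.IsClique K) (hI : IsIndepSet G Kᶜ)
    (hdom : ∀ u ∈ K, ∃ w ∉ K, G.Adj u w) (hxy : x ≠ y) (hKxy : Kᶜ = {x, y}) :
    IsCliqueDominatingPair G x y where
  ne := hxy
  not_adj := hI (by simp [hKxy]) (by simp [hKxy]) hxy
  isClique := by rwa [← hKxy, compl_compl]
  adj_or_adj u hux huy := by
    have huK : u ∈ K := by
      rw [← Set.notMem_compl_iff, hKxy]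
      exact not_or_intro hux huy
    obtain ⟨w, hw, huw⟩ := hdom u huK
    obtain rfl | rfl : w ∈ ({x, y} : Set V) := hKxy ▸ hw
    · exact .inl huw.symm
    · exact .inr huw.symm

variable [Fintype V] [DecidableRel G.Adj]

lemma Equimatchable.ncard_compl_le_one_of_even (hEq : Equimatchable G) (hK : G.IsClique K)
    (hI : IsIndepSet G Kᶜ) (hpos : ∀ u, 0 < G.degree u)
    (hsub : {u | G.degree u ≤ 1}.Subsingleton) (heven : Even K.ncard) : Kᶜ.ncard ≤ 1 := by
  classical
  rw [Set.ncard_le_one_iff_subsingleton]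
  intro u hu w hw
  by_contra huw
  have hcard : #{u, w} = 2 := card_pair huw
  have hB : HasDistinctNeighbors G ({u, w} : Finset V) :=
    hasDistinctNeighbors_of_card_le_three hpos hsub (by lia)
      (hcard.trans_le (two_le_card_biUnion_neighborFinset hsub (by lia)))
  have hle := hEq.ncard_le_one_of_even hK hI (by grind) hB
    (by rw [Set.ncard_coe_finset, hcard]; exact heven.add even_two)
  rw [Set.ncard_coe_finset] at hle
  lia

lemma Equimatchable.ncard_compl_le_two_of_odd (hEq : Equimatchable G) (hK : Maximal G.IsClique K)
    (hI : IsIndepSet G Kᶜ) (hpos : ∀ u, 0 < G.degree u)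
    (hsub : {u | G.degree u ≤ 1}.Subsingleton) (hodd : Odd K.ncard) : Kᶜ.ncard ≤ 2 := by
  classical
  by_contra! hlarge
  obtain ⟨u, hu, hdeg⟩ : ∃ u ∉ K, 2 ≤ G.degree u := by
    by_contra! hlt
    have : Kᶜ.ncard ≤ 1 := Set.ncard_le_one_iff_subsingleton.2
      (hsub.anti fun u (hu : u ∉ K) => Nat.le_of_lt_succ (hlt u hu))
    lia
  obtain ⟨y, hy, huy⟩ := exists_not_adj_of_maximal_isClique hK hu
  obtain ⟨z, huz⟩ := (G.degree_pos_iff_exists_adj u).1 (hpos u)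
  obtain ⟨w, hw, hyw⟩ := hEq.exists_adj_of_odd hK.prop hI hodd hu huz hy
  have huw : u ≠ w := by rintro rfl; exact huy hyw.symm
  obtain ⟨t, ht, htuw⟩ : ∃ t ∈ Kᶜ, t ∉ ({u, w} : Set V) :=
    Set.exists_mem_notMem_of_ncard_lt_ncard (by rwa [Set.ncard_pair huw])
  have hcard : #{u, w, t} = 3 := card_eq_three.2 ⟨u, w, t, by grind⟩
  have hN : 3 ≤ #(({u, w, t} : Finset V).biUnion (G.neighborFinset ·)) := by
    have hsubset :
        insert y (G.neighborFinset u) ⊆ ({u, w, t} : Finset V).biUnion (G.neighborFinset ·) := by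
      refine insert_subset ?_ (subset_biUnion_of_mem (G.neighborFinset ·) (by simp))
      exact mem_biUnion.2 ⟨w, by simp, by simpa using hyw.symm⟩
    have hle := card_le_card hsubset
    rw [card_insert_of_notMem (by simpa using huy), G.card_neighborFinset_eq_degree] at hle
    lia
  have hle := hEq.ncard_le_one_of_even hK.prop hI (by grind)
    (hasDistinctNeighbors_of_card_le_three hpos hsub hcard.le (hcard.trans_le hN))
    (by rw [Set.ncard_coe_finset, hcard]; exact hodd.add_odd (by decide))
  rw [Set.ncard_coe_finset] at hle
  lia

theorem Equimatchable.odd_card_and_exists_isCliqueDominatingPair (hEq : Equimatchable G)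
    (hSplit : IsSplitGraph G) (hpos : ∀ u, 0 < G.degree u)
    (hsub : {u | G.degree u ≤ 1}.Subsingleton) (hG : G ≠ ⊤) :
    Odd (Fintype.card V) ∧ ∃ x y, IsCliqueDominatingPair G x y := by
  obtain ⟨K, hK, hI⟩ := hSplit.exists_maximal_isClique
  obtain ⟨x, hx⟩ : Kᶜ.Nonempty := by
    rw [Set.nonempty_compl]
    rintro rfl
    exact hG (SimpleGraph.isClique_univ.1 hK.prop)
  have hcard : K.ncard + Kᶜ.ncard = Fintype.card V := by
    rw [Set.ncard_add_ncard_compl, Nat.card_eq_fintype_card]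
  obtain heven | hodd := Nat.even_or_odd K.ncard
  · have hone := hEq.ncard_compl_le_one_of_even hK.prop hI hpos hsub heven
    have hKx : Kᶜ = {x} := (Set.ncard_le_one_iff_subsingleton.1 hone).eq_singleton_of_mem hx
    refine ⟨?_, x, exists_isCliqueDominatingPair_of_compl_eq_singleton hK hKx⟩
    rw [← hcard, hKx, Set.ncard_singleton]
    exact heven.add_one
  · obtain ⟨z, hxz⟩ := (G.degree_pos_iff_exists_adj x).1 (hpos x)
    have hdom : ∀ u ∈ K, ∃ w ∉ K, G.Adj u w := fun u hu =>
      hEq.exists_adj_of_odd hK.prop hI hodd hx hxz hu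
    obtain ⟨y, hy, hxy⟩ := exists_not_adj_of_maximal_isClique hK hx
    obtain ⟨w, hw, hyw⟩ := hdom y hy
    have hxw : x ≠ w := by rintro rfl; exact hxy hyw.symm
    have htwo := hEq.ncard_compl_le_two_of_odd hK hI hpos hsub hodd
    have hKxw : Kᶜ = {x, w} := (Set.eq_of_subset_of_ncard_le (Set.pair_subset hx hw)
      (htwo.trans_eq (Set.ncard_pair hxw).symm)).symm
    refine ⟨?_, x, w, isCliqueDominatingPair_of_compl_eq_pair hK.prop hI hdom hxw hKxw⟩
    rw [← hcard, hKxw, Set.ncard_pair hxw]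
    exact hodd.add_even even_two

end Structure

namespace IsCliqueDominatingPair

lemma symm (h : IsCliqueDominatingPair G x y) : IsCliqueDominatingPair G y x where
  ne := h.ne.symm
  not_adj hyx := h.not_adj hyx.symm
  isClique := by rw [Set.pair_comm]; exact h.isClique
  adj_or_adj u huy hux := (h.adj_or_adj u hux huy).symm

lemma isUniversal_iff (h : IsCliqueDominatingPair G x y) {u : V} :
    G.IsUniversal u ↔ G.Adj x u ∧ G.Adj y u := by
  refine ⟨fun hu => ?_, fun ⟨hxu, hyu⟩ w huw => ?_⟩
  · have hux : u ≠ x := by rintro rfl; exact h.not_adj (hu h.ne)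
    have huy : u ≠ y := by rintro rfl; exact h.not_adj (hu h.ne.symm).symm
    exact ⟨(hu hux).symm, (hu huy).symm⟩
  · by_cases hwx : w = x
    · exact hwx ▸ hxu.symm
    by_cases hwy : w = y
    · exact hwy ▸ hyu.symm
    exact h.isClique (by grind [hxu.ne, hyu.ne]) (by grind) huw

variable [Fintype V] [DecidableRel G.Adj]

lemma neighborFinset_union [DecidableEq V] (h : IsCliqueDominatingPair G x y) :
    G.neighborFinset x ∪ G.neighborFinset y = {x, y}ᶜ := by
  ext u
  have := h.adj_or_adj u
  have := h.not_adj
  simp only [mem_union, SimpleGraph.mem_neighborFinset, mem_compl, mem_insert, mem_singleton]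
  grind [G.adj_comm, G.irrefl]

lemma degree_add_degree (h : IsCliqueDominatingPair G x y) :
    G.degree x + G.degree y + 2 = #{u | G.degree u = Fintype.card V - 1} + Fintype.card V := by
  classical
  have hinter : G.neighborFinset x ∩ G.neighborFinset y =
      ({u | G.degree u = Fintype.card V - 1} : Finset V) := by
    ext u
    simp [h.isUniversal_iff]
  have hunion : #(G.neighborFinset x ∪ G.neighborFinset y) + 2 = Fintype.card V := by
    rw [h.neighborFinset_union, ← card_pair h.ne, card_compl_add_card]
  have hsum := card_union_add_card_inter (G.neighborFinset x) (G.neighborFinset y)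
  rw [hinter, G.card_neighborFinset_eq_degree, G.card_neighborFinset_eq_degree] at hsum
  lia

lemma degree_left_add_two_le (h : IsCliqueDominatingPair G x y) :
    G.degree x + 2 ≤ Fintype.card V := by
  classical
  rw [← card_pair h.ne, ← card_compl_add_card {x, y}, ← h.neighborFinset_union,
    ← G.card_neighborFinset_eq_degree]
  gcongr
  exact subset_union_left

lemma card_le_degree_add_two (h : IsCliqueDominatingPair G x y) {u : V} (hux : u ≠ x)
    (huy : u ≠ y) : Fintype.card V ≤ G.degree u + 2 := by
  classical
  wlog hxu : G.Adj x u generalizing x y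
  · exact this h.symm huy hux ((h.adj_or_adj u hux huy).resolve_left hxu)
  have hsubset : ({u, y} : Finset V)ᶜ ⊆ G.neighborFinset u := fun w hw => by
    rw [SimpleGraph.mem_neighborFinset]
    by_cases hwx : w = x
    · exact hwx ▸ hxu.symm
    simp only [mem_compl, mem_insert, mem_singleton, not_or] at hw
    exact h.isClique (by simp [hux, huy]) (by simp [hwx, hw.2]) (Ne.symm hw.1)
  have hle := card_le_card hsubset
  rw [card_compl, card_pair huy, G.card_neighborFinset_eq_degree] at hle
  lia

end IsCliqueDominatingPair

section Ordering

variable {β : Type*} {n : ℕ} {f : V → β} {v : Fin n → V}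

lemma subsingleton_lt_second_of_monotone [Preorder β] (hv : v.Surjective)
    (hmono : Monotone (f ∘ v)) (hn : 1 < n) : {u | f u < f (v ⟨1, hn⟩)}.Subsingleton := by
  have eq_first {u : V} (hu : f u < f (v ⟨1, hn⟩)) : u = v ⟨0, by lia⟩ := by
    obtain ⟨i, rfl⟩ := hv u
    have hi : i < ⟨1, hn⟩ := hmono.reflect_lt hu
    exact congrArg v (Fin.ext (Nat.lt_one_iff.1 hi))
  exact fun a ha b hb => (eq_first ha).trans (eq_first hb).symm

lemma first_add_second_eq_of_monotone [AddCommMagma β] [PartialOrder β] (hv : v.Bijective)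
    (hmono : Monotone (f ∘ v)) (hn : 1 < n) (hxy : x ≠ y)
    (hmin : ∀ u, u ≠ x → u ≠ y → f x ≤ f u ∧ f y ≤ f u) :
    f (v ⟨0, by lia⟩) + f (v ⟨1, hn⟩) = f x + f y := by
  obtain ⟨i, rfl⟩ := hv.surjective x
  obtain ⟨j, rfl⟩ := hv.surjective y
  wlog hij : i < j generalizing i j
  · rw [add_comm (f (v i))]
    have hji : j < i := lt_of_le_of_ne (not_lt.1 hij) (by grind)
    exact this j i hxy.symm (fun u huj hui => (hmin u hui huj).symm) hji
  have h01 : f (v ⟨0, by lia⟩) ≤ f (v ⟨1, hn⟩) := hmono (Fin.mk_le_mk.2 zero_le_one)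
  have h0i : f (v ⟨0, by lia⟩) ≤ f (v i) := hmono (Fin.mk_le_of_le_val (Nat.zero_le i))
  have h1j : f (v ⟨1, hn⟩) ≤ f (v j) := hmono (Fin.mk_le_of_le_val (Nat.one_le_of_lt hij))
  obtain rfl | hi := eq_or_ne i ⟨0, by lia⟩
  · obtain rfl | hj := eq_or_ne j ⟨1, hn⟩
    · rfl
    obtain ⟨-, hj1⟩ := hmin (v ⟨1, hn⟩) (hv.injective.ne (by simp)) (hv.injective.ne hj.symm)
    rw [h1j.antisymm hj1]
  · have hj : j ≠ ⟨0, by lia⟩ := by rintro rfl; exact Nat.not_lt_zero _ hij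
    obtain ⟨hi0, hj0⟩ := hmin (v ⟨0, by lia⟩) (hv.injective.ne hi.symm) (hv.injective.ne hj.symm)
    rw [h0i.antisymm hi0, h1j.antisymm (hj0.trans h01)]

lemma le_third_of_monotone [Preorder β] {m : β} (hv : v.Injective) (hmono : Monotone (f ∘ v))
    (hn : 2 < n) (hle : ∀ u, u ≠ x → u ≠ y → m ≤ f u) : m ≤ f (v ⟨2, hn⟩) := by
  classical
  obtain ⟨u, hu, huxy⟩ : ∃ u ∈ (Iic ⟨2, hn⟩).map ⟨v, hv⟩, u ∉ ({x, y} : Finset V) :=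
    exists_mem_notMem_of_card_lt_card <| by
      rw [card_map, Fin.card_Iic]
      exact Nat.lt_succ_of_le card_le_two
  obtain ⟨i, hi, rfl⟩ := mem_map.1 hu
  simp only [mem_insert, mem_singleton, not_or] at huxy
  exact (hle _ huxy.1 huxy.2).trans (hmono (mem_Iic.1 hi))

end Ordering

theorem stmt_17 {V : Type*} [Fintype V] [DecidableEq V]
    (G : SimpleGraph V) [DecidableRel G.Adj]
    (n : ℕ) (hn : Fintype.card V = n) (hn4 : 4 ≤ n)
    (hNoIso : ∀ v : V, ∃ w : V, G.Adj v w)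
    (p : ℕ)
    (hp : p = (Finset.univ.filter fun v : V => G.degree v = n - 1).card)
    (v : Fin n → V) (hbij : Function.Bijective v)
    (hmono : ∀ i j : Fin n, i ≤ j → G.degree (v i) ≤ G.degree (v j))
    (hEq : Equimatchable G) (hSplit : IsSplitGraph G)
    (h2 : 2 ≤ G.degree (v ⟨1, by omega⟩))
    (h2' : G.degree (v ⟨1, by omega⟩) ≤ n - 2) :
    Odd n ∧ n - 2 ≤ G.degree (v ⟨2, by omega⟩) ∧
      G.degree (v ⟨0, by omega⟩) + G.degree (v ⟨1, by omega⟩) = p + n - 2 := by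
  subst hn hp
  have hdeg : Monotone ((G.degree ·) ∘ v) := hmono
  have hpos u : 0 < G.degree u := (G.degree_pos_iff_exists_adj u).2 (hNoIso u)
  have hsub : {u | G.degree u ≤ 1}.Subsingleton :=
    (subsingleton_lt_second_of_monotone hbij.surjective hdeg (by lia)).anti
      fun u (hu : G.degree u ≤ 1) => hu.trans_lt h2
  have hG : G ≠ ⊤ := by
    intro hG
    have huniv : G.IsUniversal (v ⟨1, by lia⟩) := fun u hu => by rw [hG]; exact hu
    have := (G.degree_eq_card_sub_one _).2 huniv
    lia
  obtain ⟨hodd, x, y, hxy⟩ :=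
    hEq.odd_card_and_exists_isCliqueDominatingPair hSplit hpos hsub hG
  have hx := hxy.degree_left_add_two_le
  have hy := hxy.symm.degree_left_add_two_le
  have hsum := first_add_second_eq_of_monotone hbij hdeg (by lia) hxy.ne fun u hux huy => by
    have := hxy.card_le_degree_add_two hux huy
    lia
  have hthird := le_third_of_monotone hbij.injective hdeg (by lia) fun u hux huy =>
    Nat.sub_le_iff_le_add.2 (hxy.card_le_degree_add_two hux huy)
  have := hxy.degree_add_degree
  exact ⟨hodd, hthird, by lia⟩
end

section
/- Let G be a finite simple undirected graph on n ≥ 4 vertices with no isolated vertices, let p be the number of vertices of degree n − 1, and suppose n is odd and there exist two vertices x and y with d(x) + d(y) = p + n − 2 such that every vertex other than x and y has degree n − 1 or n − 2. If x and y are adjacent, then p = n, i.e., G is complete. -/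
open Finset

variable {V : Type*}

/-!
Pass to the complement `H` of `G`: every vertex other than `x` and `y` has at most one neighbour in
`H`, `x` and `y` are not adjacent in `H`, and their degrees in `H` add up to the number `n - p` of
non-isolated vertices of `H`. Distinct edges of `H` at `x` or `y` end at distinct non-isolated
vertices outside `{x, y}`, so these `n - p` endpoints are all the non-isolated vertices. Hence `x`
and `y` are themselves isolated in `H`, and `n - p = 0`.
-/

section

variable [Fintype V]

theorem sum_degree_le_sum_degree_compl_of_isIndepSet [DecidableEq V] (H : SimpleGraph V)
    [DecidableRel H.Adj] {s : Finset V} (hs : H.IsIndepSet s) :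
    ∑ v ∈ s, H.degree v ≤ ∑ v ∈ sᶜ, H.degree v := by
  have neighbors_outside : ∀ v ∈ s, H.degree v = #(sᶜ.bipartiteAbove H.Adj v) := by
    intro v hv
    rw [← H.card_neighborFinset_eq_degree]
    congr 1
    ext w
    simp only [SimpleGraph.mem_neighborFinset, mem_bipartiteAbove, mem_compl]
    exact ⟨fun h => ⟨fun hw => hs hv hw h.ne h, h⟩, And.right⟩
  calc ∑ v ∈ s, H.degree v
    _ = ∑ v ∈ s, #(sᶜ.bipartiteAbove H.Adj v) := sum_congr rfl neighbors_outside
    _ = ∑ w ∈ sᶜ, #(s.bipartiteBelow H.Adj w) :=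
      sum_card_bipartiteAbove_eq_sum_card_bipartiteBelow _
    _ ≤ ∑ w ∈ sᶜ, H.degree w := by
      refine sum_le_sum fun w _ => ?_
      rw [← H.card_neighborFinset_eq_degree]
      refine card_le_card fun v hv => ?_
      exact (H.mem_neighborFinset w v).2 ((mem_bipartiteBelow H.Adj).1 hv).2.symm

theorem eq_bot_of_isIndepSet_of_card_degree_ne_zero_le_sum (H : SimpleGraph V)
    [DecidableRel H.Adj] {s : Finset V} (hs : H.IsIndepSet s)
    (hdeg : ∀ v ∉ s, H.degree v ≤ 1)
    (hcard : #{v | H.degree v ≠ 0} ≤ ∑ v ∈ s, H.degree v) : H = ⊥ := by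
  classical
  have sum_compl_le : ∑ v ∈ sᶜ, H.degree v ≤ #{v ∈ sᶜ | H.degree v ≠ 0} := by
    rw [card_filter]
    refine sum_le_sum fun v hv => ?_
    have := hdeg v (mem_compl.1 hv)
    split_ifs <;> omega
  have card_split : #{v ∈ s | H.degree v ≠ 0} + #{v ∈ sᶜ | H.degree v ≠ 0} =
      #{v | H.degree v ≠ 0} := by
    simp only [card_filter, sum_add_sum_compl]
  have sum_le := sum_degree_le_sum_degree_compl_of_isIndepSet H hs
  have isolated_on : ∀ v ∈ s, H.degree v = 0 := by
    have : #{v ∈ s | H.degree v ≠ 0} = 0 := by omega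
    simpa only [card_eq_zero, filter_eq_empty_iff, not_not] using this
  have isolated : ∀ v, H.degree v = 0 := by
    rw [sum_eq_zero isolated_on, Nat.le_zero] at hcard
    simpa [filter_eq_empty_iff] using hcard
  exact H.eq_bot_iff_isIsolated.2 fun v => (H.degree_eq_zero v).1 (isolated v)

theorem eq_top_of_isClique_of_card_degree_ne_le_sum (G : SimpleGraph V) [DecidableRel G.Adj]
    {s : Finset V} (hs : G.IsClique s) (hdeg : ∀ v ∉ s, Fintype.card V - 2 ≤ G.degree v)
    (hcard : #{v | G.degree v ≠ Fintype.card V - 1} ≤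
      ∑ v ∈ s, (Fintype.card V - 1 - G.degree v)) : G = ⊤ := by
  classical
  have degree_compl_eq_zero_iff (v : V) :
      Gᶜ.degree v = 0 ↔ G.degree v = Fintype.card V - 1 := by
    have := G.degree_lt_card_verts v
    rw [G.degree_compl]
    omega
  rw [← compl_eq_bot]
  refine eq_bot_of_isIndepSet_of_card_degree_ne_zero_le_sum Gᶜ (G.isIndepSet_compl.2 hs)
    (fun v hv => ?_) ?_
  · have := hdeg v hv
    rw [G.degree_compl]
    omega
  · simp only [ne_eq, degree_compl_eq_zero_iff]
    simpa only [G.degree_compl] using hcard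

theorem stmt_19_general (G : SimpleGraph V) [DecidableRel G.Adj] {x y : V} (hadj : G.Adj x y)
    (hsum : G.degree x + G.degree y + 2 ≤
      #{v | G.degree v = Fintype.card V - 1} + Fintype.card V)
    (hdeg : ∀ v, v ≠ x → v ≠ y → Fintype.card V - 2 ≤ G.degree v) : G = ⊤ := by
  classical
  have clique : G.IsClique ({x, y} : Finset V) := by simp [hadj]
  refine eq_top_of_isClique_of_card_degree_ne_le_sum G clique (fun v hv => ?_) ?_
  · simp only [mem_insert, mem_singleton, not_or] at hv
    exact hdeg v hv.1 hv.2
  · rw [sum_pair hadj.ne]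
    have card_split : #{v | G.degree v = Fintype.card V - 1} +
        #{v | G.degree v ≠ Fintype.card V - 1} = Fintype.card V :=
      card_filter_add_card_filter_not _
    have := G.degree_lt_card_verts x
    have := G.degree_lt_card_verts y
    omega

end

theorem stmt_19 {V : Type*} [Fintype V] [DecidableEq V]
    (G : SimpleGraph V) [DecidableRel G.Adj]
    (n : ℕ) (hn : Fintype.card V = n) (hn4 : 4 ≤ n)
    (hNoIso : ∀ v : V, ∃ w : V, G.Adj v w)
    (p : ℕ)
    (hp : p = (Finset.univ.filter fun v : V => G.degree v = n - 1).card)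
    (hodd : Odd n)
    (x y : V) (hxy : x ≠ y) (hsum : G.degree x + G.degree y = p + n - 2)
    (hdeg : ∀ v : V, v ≠ x → v ≠ y → (G.degree v = n - 1 ∨ G.degree v = n - 2))
    (hadj : G.Adj x y) :
    p = n := by
  subst hn hp
  have hG : G = ⊤ := stmt_19_general G hadj (by omega) fun v hvx hvy => by
    rcases hdeg v hvx hvy with h | h <;> omega
  simp [(G.degree_eq_card_sub_one _).2 (hG ▸ SimpleGraph.IsUniversal.top)]
end
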